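/- Let I be a right L(V)-submodule of L(V,W) and suppose there exist T₁,…,Tₙ ∈ I such that im(I) = span of ⋃_{i=1}^n range Tᵢ. Then I is generated as a right L(V)-module by T₁,…,Tₙ. -/

import Mathlib

variable {D V W : Type*} [DivisionRing D]
  [AddCommGroup V] [Module D V] [AddCommGroup W] [Module D W]

/-- `I` is a right `L(V)`-submodule of `L(V,W)`: closed under addition and
under right composition with arbitrary endomorphisms of `V`. -/
def IsRightSubmodule (I : Set (V →ₗ[D] W)) : Prop :=
  (0 : V →ₗ[D] W) ∈ I ∧ (∀ S T : V →ₗ[D] W, S ∈ I → T ∈ I → S + T ∈ I) ∧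
    (∀ S ∈ I, ∀ A : V →ₗ[D] V, S.comp A ∈ I)

/-- `I` is a left `L(W)`-submodule of `L(V,W)`: closed under addition and
under left composition with arbitrary endomorphisms of `W`. -/
def IsLeftSubmodule (I : Set (V →ₗ[D] W)) : Prop :=
  (0 : V →ₗ[D] W) ∈ I ∧ (∀ S T : V →ₗ[D] W, S ∈ I → T ∈ I → S + T ∈ I) ∧
    (∀ S ∈ I, ∀ A : W →ₗ[D] W, A.comp S ∈ I)

/-- The image of a family of linear maps: the span of the union of their ranges. -/
def imageOf (I : Set (V →ₗ[D] W)) : Submodule D W :=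
  ⨆ T ∈ I, LinearMap.range T

/-- `I` is finitely generated as a right `L(V)`-module. -/
def RightFG (I : Set (V →ₗ[D] W)) : Prop :=
  ∃ (n : ℕ) (T : Fin n → (V →ₗ[D] W)), (∀ i, T i ∈ I) ∧
    ∀ S ∈ I, ∃ P : Fin n → (V →ₗ[D] V), S = ∑ i, (T i).comp (P i)

/-- `I` is finitely generated as a left `L(W)`-module. -/
def LeftFG (I : Set (V →ₗ[D] W)) : Prop :=
  ∃ (n : ℕ) (T : Fin n → (V →ₗ[D] W)), (∀ i, T i ∈ I) ∧
    ∀ S ∈ I, ∃ P : Fin n → (W →ₗ[D] W), S = ∑ i, (P i).comp (T i)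

/-!
The sum map `⨁ᵢ V → W`, `(xᵢ) ↦ ∑ᵢ Tᵢ xᵢ`, has range `⨆ᵢ range Tᵢ`, which contains `range S` for
every `S ∈ I`. As `V` is projective, such an `S` lifts through the sum map, and the components
`Pᵢ : V → V` of a lift satisfy `S = ∑ᵢ Tᵢ ∘ Pᵢ`.
-/

section Semiring

variable {R M N ι : Type*} [Semiring R] [AddCommMonoid M] [Module R M]
  [AddCommMonoid N] [Module R N]

theorem range_lsum_eq_iSup_range [Fintype ι] [DecidableEq ι] {φ : ι → Type*}
    [∀ i, AddCommMonoid (φ i)] [∀ i, Module R (φ i)] (f : ∀ i, φ i →ₗ[R] N) :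
    LinearMap.range (LinearMap.lsum R φ ℕ f) = ⨆ i, LinearMap.range (f i) := by
  have lsum_comp_single (i : ι) : LinearMap.lsum R φ ℕ f ∘ₗ LinearMap.single R φ i = f i :=
    congrFun ((LinearMap.lsum R φ ℕ).symm_apply_apply f) i
  simp only [LinearMap.range_eq_map (LinearMap.lsum R φ ℕ f), ← LinearMap.iSup_range_single,
    Submodule.map_iSup, ← LinearMap.range_comp, lsum_comp_single]

theorem exists_comp_eq_of_range_le_range [Module.Projective R M] {N' : Type*} [AddCommMonoid N']
    [Module R N'] {f : N' →ₗ[R] N} {g : M →ₗ[R] N}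
    (hgf : LinearMap.range g ≤ LinearMap.range f) : ∃ h : M →ₗ[R] N', f ∘ₗ h = g := by
  obtain ⟨h, hh⟩ := Module.projective_lifting_property f.rangeRestrict
    (g.codRestrict (LinearMap.range f) fun x => hgf ⟨x, rfl⟩) f.surjective_rangeRestrict
  exact ⟨h, congrArg ((LinearMap.range f).subtype ∘ₗ ·) hh⟩

theorem exists_eq_sum_comp_of_range_le_iSup_range [Module.Projective R M] [Fintype ι]
    {φ : ι → Type*} [∀ i, AddCommMonoid (φ i)] [∀ i, Module R (φ i)] {f : ∀ i, φ i →ₗ[R] N}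
    {g : M →ₗ[R] N} (hg : LinearMap.range g ≤ ⨆ i, LinearMap.range (f i)) :
    ∃ P : ∀ i, M →ₗ[R] φ i, g = ∑ i, f i ∘ₗ P i := by
  classical
  rw [← range_lsum_eq_iSup_range] at hg
  obtain ⟨Q, rfl⟩ := exists_comp_eq_of_range_le_range hg
  refine ⟨fun i => LinearMap.proj i ∘ₗ Q, ?_⟩
  ext x
  simp only [LinearMap.lsum_apply, LinearMap.comp_apply, LinearMap.sum_apply]

-- Precomposition makes `M →ₗ[R] N` a right `Module.End R M`-module; Mathlib spells this as a left
-- module over `(Module.End R M)ᵈᵐᵃ`.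
theorem mem_span_range_iff_exists_eq_sum_comp [Fintype ι] {T : ι → M →ₗ[R] N} {S : M →ₗ[R] N} :
    S ∈ Submodule.span (Module.End R M)ᵈᵐᵃ (Set.range T) ↔
      ∃ P : ι → Module.End R M, S = ∑ i, T i ∘ₗ P i := by
  rw [Submodule.mem_span_range_iff_exists_fun]
  exact ⟨fun ⟨c, hc⟩ => ⟨fun i => DomMulAct.mk.symm (c i), hc.symm⟩,
    fun ⟨P, hP⟩ => ⟨fun i => DomMulAct.mk (P i), hP.symm⟩⟩

theorem stmt_10_general [Module.Projective R M] [Finite ι]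
    (I : Submodule (Module.End R M)ᵈᵐᵃ (M →ₗ[R] N)) (T : ι → M →ₗ[R] N) (hT : ∀ i, T i ∈ I)
    (him : ⨆ S ∈ I, LinearMap.range S = ⨆ i, LinearMap.range (T i)) :
    I = Submodule.span (Module.End R M)ᵈᵐᵃ (Set.range T) := by
  have := Fintype.ofFinite ι
  refine le_antisymm (fun S hS => ?_) (Submodule.span_le.mpr (Set.range_subset_iff.mpr hT))
  have range_le : LinearMap.range S ≤ ⨆ i, LinearMap.range (T i) :=
    him ▸ le_iSup₂_of_le S hS le_rfl
  exact mem_span_range_iff_exists_eq_sum_comp.mpr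
    (exists_eq_sum_comp_of_range_le_iSup_range range_le)

end Semiring

/-- A right `L(V)`-submodule of `L(V,W)`, bundled as a submodule for the action of
`(Module.End D V)ᵈᵐᵃ`, that is, of endomorphisms of `V` by precomposition. -/
def IsRightSubmodule.toSubmodule {I : Set (V →ₗ[D] W)} (hI : IsRightSubmodule I) :
    Submodule (Module.End D V)ᵈᵐᵃ (V →ₗ[D] W) where
  carrier := I
  zero_mem' := hI.1
  add_mem' {S T} hS hT := hI.2.1 S T hS hT
  smul_mem' A S hS := hI.2.2 S hS (DomMulAct.mk.symm A)

theorem stmt_10 (I : Set (V →ₗ[D] W)) (hI : IsRightSubmodule I)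
    (n : ℕ) (T : Fin n → (V →ₗ[D] W)) (hT : ∀ i, T i ∈ I)
    (him : imageOf I = ⨆ i, LinearMap.range (T i)) :
    I = {S : V →ₗ[D] W | ∃ P : Fin n → (V →ₗ[D] V), S = ∑ i, (T i).comp (P i)} := by
  have I_eq_span := stmt_10_general hI.toSubmodule T hT him
  ext S
  exact (SetLike.ext_iff.mp I_eq_span S).trans mem_span_range_iff_exists_eq_sum_comp
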